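/- arXiv:2105.02058 — 5 statements merged into one kernel-verified Lean document; each statement's English description precedes it below -/
import Mathlib

section
/- Let λ ∈ ℂ be such that P⊥(H − λ)P⊥ is invertible on Ran P⊥, with inverse R⊥(λ). Then λ belongs to the spectrum of H if and only if the restriction of F_P(H − λ) to Ran P (an operator from Ran P to Ran P) fails to be bijective; equivalently, H − λ is bijective on 𝓗 if and only if F_P(H − λ) restricted to Ran P is bijective. -/
/-!
Write `T = H - λ`, `Q = 1 - P`, and let `R` be the inverse of `Q T Q` on `Ran Q`. Block elimination
with respect to `Ran P ⊕ Ran Q` gives the Schur factorization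
`T = (P + T R) (F + Q T Q) (P + R T)`, where `F = P (T - T R T) P` is the Feshbach–Schur map.
The outer factors are unipotent, and `F + Q T Q = (F + Q) (P + Q T Q)` with `P + Q T Q` invertible.
Hence `T` is bijective iff `F + Q` is, and `F + Q` acts as `F` on `Ran P` and as the identity on
`Ran Q`. By the open mapping theorem, bijectivity of `T` is invertibility in the Banach algebra of
bounded operators, which is the spectral condition.
-/

open Function Set

theorem bijective_restrict_iff_bijOn {α β : Type*} {f : α → β} {s : Set α} {t : Set β}
    (h : MapsTo f s t) : Bijective (h.restrict f s t) ↔ BijOn f s t :=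
  ⟨fun hb => ⟨h, h.restrict_inj.1 hb.1, h.restrict_surjective_iff.1 hb.2⟩, BijOn.bijective⟩

theorem bijective_add_sub_iff_bijOn_range {M : Type*} [AddCommGroup M] {p : M →+ M} {f : M → M}
    (hp : ∀ x, p (p x) = p x) (hpf : ∀ x, p (f x) = f x) (hfp : ∀ x, f (p x) = f x) :
    Bijective (fun x => f x + (x - p x)) ↔ BijOn f (range p) (range p) := by
  have proj_apply (x : M) : p (f x + (x - p x)) = f x := by
    rw [map_add, map_sub, hp, sub_self, add_zero, hpf]
  constructor
  · rintro ⟨hinj, hsurj⟩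
    refine ⟨fun x _ => ⟨f x, hpf x⟩, ?_, ?_⟩
    · rintro _ ⟨a, rfl⟩ _ ⟨b, rfl⟩ hab
      exact hinj (by simp only [hab, hp, sub_self])
    · rintro _ ⟨y, rfl⟩
      obtain ⟨x, hx : f x + (x - p x) = p y⟩ := hsurj (p y)
      exact ⟨p x, mem_range_self x, by rw [hfp, ← proj_apply x, hx, hp]⟩
  · rintro ⟨-, hinj, hsurj⟩
    constructor
    · intro x y (hxy : f x + (x - p x) = f y + (y - p y))
      have hf : f x = f y := by rw [← proj_apply x, ← proj_apply y, hxy]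
      have hpxy : p x = p y :=
        hinj (mem_range_self x) (mem_range_self y) (by rw [hfp, hfp, hf])
      simpa only [hf, hpxy, add_right_inj, sub_left_inj] using hxy
    · intro y
      obtain ⟨_, ⟨x, rfl⟩, hx⟩ := hsurj (mem_range_self y)
      have hpx : p (p x + (y - p y)) = p x := by rw [map_add, map_sub, hp, hp, sub_self, add_zero]
      have hfx : f (p x + (y - p y)) = p y := by rw [← hfp, hpx, hx]
      exact ⟨p x + (y - p y), by simp only [hfx, hpx, add_sub_cancel_left, add_sub_cancel]⟩

theorem bijective_smul_mul_mul_iff {A M : Type*} [Monoid A] [MulAction A M] {u v : A}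
    (hu : IsUnit u) (a : A) (hv : IsUnit v) :
    Bijective (fun x : M => (u * a * v) • x) ↔ Bijective (fun x : M => a • x) := by
  simp only [mul_smul]
  exact (Bijective.of_comp_iff' hu.smul_bijective _).trans
    (Bijective.of_comp_iff _ hv.smul_bijective)

theorem mem_spectrum_iff_not_bijective {𝕜 E : Type*} [NontriviallyNormedField 𝕜]
    [NormedAddCommGroup E] [NormedSpace 𝕜 E] [CompleteSpace E] {T : E →L[𝕜] E} {z : 𝕜} :
    z ∈ spectrum 𝕜 T ↔ ¬ Bijective ⇑(T - z • 1) := by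
  rw [spectrum.mem_iff, IsUnit.sub_iff, Algebra.algebraMap_eq_smul_one,
    ContinuousLinearMap.isUnit_iff_bijective]

/-- `r` is the inverse of the compression `(1 - p) t (1 - p)` in the corner ring of `1 - p`. With
`t = H - λ` and `p = P`, this is the operator `R⊥(λ)`, extended by zero on `Ran P`. -/
structure IsReducedInverse {A : Type*} [Ring A] (p t r : A) : Prop where
  compl_mul_mul_compl : (1 - p) * (r * (1 - p)) = r
  mul_compression : r * ((1 - p) * (t * (1 - p))) = 1 - p
  compression_mul : (1 - p) * (t * (1 - p)) * r = 1 - p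

/-- The Feshbach–Schur map `p (t - t r t) p`, as an element of the whole ring; `F_P(H - λ)` is the
case `t = H - λ`, `r = R⊥(λ)`. -/
def feshbachSchur {A : Type*} [Ring A] (p t r : A) : A :=
  p * ((t - t * (r * t)) * p)

section Ring

variable {A : Type*} [Ring A] {p t r : A}

theorem proj_mul_feshbachSchur (hp : IsIdempotentElem p) (t r : A) :
    p * feshbachSchur p t r = feshbachSchur p t r := by
  rw [feshbachSchur, ← mul_assoc, hp.eq]

theorem feshbachSchur_mul_proj (hp : IsIdempotentElem p) (t r : A) :
    feshbachSchur p t r * p = feshbachSchur p t r := by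
  rw [feshbachSchur, mul_assoc, mul_assoc, hp.eq]

theorem feshbachSchur_add_compression (hp : IsIdempotentElem p) (t r : A) :
    feshbachSchur p t r + (1 - p) * (t * (1 - p)) =
      (feshbachSchur p t r + (1 - p)) * (p + (1 - p) * (t * (1 - p))) := by
  simp only [feshbachSchur, add_mul, mul_add, mul_assoc, hp.eq, hp.one_sub_mul_self,
    ← mul_assoc p (1 - p), hp.mul_one_sub_self, ← mul_assoc (1 - p) (1 - p), hp.one_sub.eq,
    zero_mul, mul_zero, add_zero, zero_add]

namespace IsReducedInverse

theorem proj_mul (h : IsReducedInverse p t r) (hp : IsIdempotentElem p) : p * r = 0 := by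
  rw [← h.compl_mul_mul_compl, ← mul_assoc, hp.mul_one_sub_self, zero_mul]

theorem mul_proj (h : IsReducedInverse p t r) (hp : IsIdempotentElem p) : r * p = 0 := by
  rw [← h.compl_mul_mul_compl, mul_assoc, mul_assoc, hp.one_sub_mul_self, mul_zero, mul_zero]

theorem compl_mul (h : IsReducedInverse p t r) (hp : IsIdempotentElem p) : (1 - p) * r = r := by
  rw [sub_mul, one_mul, h.proj_mul hp, sub_zero]

theorem mul_compl (h : IsReducedInverse p t r) (hp : IsIdempotentElem p) : r * (1 - p) = r := by
  rw [mul_sub, mul_one, h.mul_proj hp, sub_zero]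

theorem mul_mul_compl (h : IsReducedInverse p t r) (hp : IsIdempotentElem p) :
    r * (t * (1 - p)) = 1 - p := by
  simpa only [← mul_assoc, h.mul_compl hp] using h.mul_compression

theorem compl_mul_mul (h : IsReducedInverse p t r) (hp : IsIdempotentElem p) :
    (1 - p) * (t * r) = 1 - p := by
  simpa only [mul_assoc, h.compl_mul hp] using h.compression_mul

theorem feshbachSchur_eq (h : IsReducedInverse p t r) (hp : IsIdempotentElem p) :
    feshbachSchur p t r = t - t * (r * t) := by
  have right_compl : (t - t * (r * t)) * (1 - p) = 0 := by
    rw [sub_mul, mul_assoc, mul_assoc, h.mul_mul_compl hp, sub_self]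
  have left_compl : (1 - p) * (t - t * (r * t)) = 0 := by
    rw [mul_sub, ← mul_assoc t, ← mul_assoc, h.compl_mul_mul hp, sub_self]
  rw [mul_sub, mul_one, sub_eq_zero] at right_compl
  rw [sub_mul, one_mul, sub_eq_zero] at left_compl
  rw [feshbachSchur, ← right_compl, ← left_compl]

theorem isUnit_proj_add_mul_inverse (h : IsReducedInverse p t r) (hp : IsIdempotentElem p) :
    IsUnit (p + t * r) := by
  have hsq : (p * (t * r)) ^ 2 = 0 := by
    rw [sq, mul_assoc, mul_assoc, ← mul_assoc r, h.mul_proj hp, zero_mul, mul_zero, mul_zero]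
  have heq : p + t * r = 1 + p * (t * r) := by
    have hc := h.compl_mul_mul hp
    rw [sub_mul, one_mul, sub_eq_iff_eq_add] at hc
    nth_rw 1 [hc]
    abel
  rw [heq]
  exact IsNilpotent.isUnit_one_add ⟨2, hsq⟩

theorem isUnit_proj_add_inverse_mul (h : IsReducedInverse p t r) (hp : IsIdempotentElem p) :
    IsUnit (p + r * t) := by
  have hsq : (r * (t * p)) ^ 2 = 0 := by
    rw [sq, mul_assoc, mul_assoc, ← mul_assoc p, h.proj_mul hp, zero_mul, mul_zero, mul_zero]
  have heq : p + r * t = 1 + r * (t * p) := by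
    have hc := h.mul_mul_compl hp
    rw [mul_sub, mul_sub, mul_one, sub_eq_iff_eq_add] at hc
    rw [hc]
    abel
  rw [heq]
  exact IsNilpotent.isUnit_one_add ⟨2, hsq⟩

theorem isUnit_proj_add_compression (h : IsReducedInverse p t r) (hp : IsIdempotentElem p) :
    IsUnit (p + (1 - p) * (t * (1 - p))) := by
  refine isUnit_iff_exists.2 ⟨p + r, ?_, ?_⟩
  · simp only [add_mul, mul_add, h.compression_mul, h.proj_mul hp, mul_assoc, hp.eq,
      hp.one_sub_mul_self, mul_zero, add_zero, zero_add, add_sub_cancel]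
  · simp only [add_mul, mul_add, h.mul_compression, h.mul_proj hp, hp.eq,
      ← mul_assoc p, hp.mul_one_sub_self, zero_mul, add_zero, zero_add, add_sub_cancel]

theorem schur_factorization (h : IsReducedInverse p t r) (hp : IsIdempotentElem p) :
    (p + t * r) * (feshbachSchur p t r + (1 - p) * (t * (1 - p))) * (p + r * t) = t := by
  set F := feshbachSchur p t r with hF
  have hpF : p * F = F := proj_mul_feshbachSchur hp t r
  have hFp : F * p = F := feshbachSchur_mul_proj hp t r
  have hrF : r * F = 0 := by rw [hF, feshbachSchur, ← mul_assoc, h.mul_proj hp, zero_mul]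
  have hFr : F * r = 0 := by
    rw [hF, feshbachSchur, mul_assoc, mul_assoc, h.proj_mul hp, mul_zero, mul_zero]
  calc (p + t * r) * (F + (1 - p) * (t * (1 - p))) * (p + r * t)
      = (F + t * (1 - p)) * (p + r * t) := by
        simp only [add_mul, mul_add, mul_assoc, hpF, hrF, h.mul_compression, mul_zero, zero_add,
          add_zero, ← mul_assoc p, hp.mul_one_sub_self, zero_mul]
    _ = F + t * (r * t) := by
        simp only [add_mul, mul_add, mul_assoc, hFp, hp.one_sub_mul_self, ← mul_assoc F r, hFr,
          ← mul_assoc (1 - p) r, h.compl_mul hp, zero_mul, mul_zero, add_zero, zero_add]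
    _ = t := by rw [hF, h.feshbachSchur_eq hp, sub_add_cancel]

theorem bijective_smul_iff_bijOn {M : Type*} [AddCommGroup M] [Module A M]
    (h : IsReducedInverse p t r) (hp : IsIdempotentElem p) :
    Bijective (fun x : M => t • x) ↔
      BijOn (fun x : M => feshbachSchur p t r • x)
        (range fun x : M => p • x) (range fun x : M => p • x) := by
  have hfactor : (p + t * r) * (feshbachSchur p t r + (1 - p)) *
      ((p + (1 - p) * (t * (1 - p))) * (p + r * t)) = t := by
    rw [← mul_assoc, mul_assoc (p + t * r), ← feshbachSchur_add_compression hp,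
      h.schur_factorization hp]
  calc Bijective (fun x : M => t • x)
      ↔ Bijective (fun x : M => (feshbachSchur p t r + (1 - p)) • x) := by
        rw [← bijective_smul_mul_mul_iff (h.isUnit_proj_add_mul_inverse hp)
          (feshbachSchur p t r + (1 - p))
          ((h.isUnit_proj_add_compression hp).mul (h.isUnit_proj_add_inverse_mul hp)), hfactor]
    _ ↔ Bijective (fun x : M => feshbachSchur p t r • x + (x - p • x)) := by
        simp only [add_smul, sub_smul, one_smul]
    _ ↔ _ := bijective_add_sub_iff_bijOn_range (p := DistribSMul.toAddMonoidHom M p)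
        (fun x => by simp only [DistribSMul.toAddMonoidHom_apply, smul_smul, hp.eq])
        (fun x => by simp only [DistribSMul.toAddMonoidHom_apply, smul_smul,
          proj_mul_feshbachSchur hp])
        (fun x => by simp only [DistribSMul.toAddMonoidHom_apply, smul_smul,
          feshbachSchur_mul_proj hp])

end IsReducedInverse

end Ring

section Operator

variable {𝕜 E : Type*} [Ring 𝕜] [AddCommGroup E] [TopologicalSpace E] [IsTopologicalAddGroup E]
  [Module 𝕜 E]

theorem IsReducedInverse.of_forall_mem_range {P T R : E →L[𝕜] E} (hP : IsIdempotentElem P)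
    (hR : R = (1 - P) * (R * (1 - P)))
    (hleft : ∀ x ∈ range ⇑(1 - P), R (((1 - P) * (T * (1 - P))) x) = (1 - P) x)
    (hright : ∀ x ∈ range ⇑(1 - P), ((1 - P) * (T * (1 - P))) (R x) = (1 - P) x) :
    IsReducedInverse P T R where
  compl_mul_mul_compl := hR.symm
  mul_compression := by
    have hcomp : R * ((1 - P) * (T * (1 - P))) * (1 - P) = (1 - P) * (1 - P) :=
      ContinuousLinearMap.ext fun x => hleft _ (mem_range_self x)
    simpa only [mul_assoc, hP.one_sub.eq] using hcomp
  compression_mul := by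
    have hRQ : R * (1 - P) = R := by
      rw [hR, mul_assoc, mul_assoc, hP.one_sub.eq]
    have hcomp : (1 - P) * (T * (1 - P)) * (R * (1 - P)) = (1 - P) * (1 - P) :=
      ContinuousLinearMap.ext fun x => hright _ (mem_range_self x)
    rwa [hRQ, hP.one_sub.eq] at hcomp

theorem mapsTo_feshbachSchur_range (P T R : E →L[𝕜] E) :
    MapsTo ⇑(feshbachSchur P T R) (range P) (range P) :=
  fun _ _ => mem_range_self _

end Operator

theorem feshbach_schur_isospectral_general {𝕜 E : Type*} [NontriviallyNormedField 𝕜]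
    [NormedAddCommGroup E] [NormedSpace 𝕜 E] [CompleteSpace E] {H P R : E →L[𝕜] E} {z : 𝕜}
    (hP : IsIdempotentElem P) (hR : IsReducedInverse P (H - z • 1) R) :
    (z ∈ spectrum 𝕜 H ↔
      ¬ Bijective (mapsTo_feshbachSchur_range P (H - z • 1) R).restrict) ∧
    (Bijective ⇑(H - z • 1) ↔
      Bijective (mapsTo_feshbachSchur_range P (H - z • 1) R).restrict) := by
  have hbij : Bijective ⇑(H - z • 1) ↔
      Bijective (mapsTo_feshbachSchur_range P (H - z • 1) R).restrict :=
    (hR.bijective_smul_iff_bijOn hP).trans (bijective_restrict_iff_bijOn _).symm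
  exact ⟨mem_spectrum_iff_not_bijective.trans (not_congr hbij), hbij⟩

/-- Feshbach–Schur map, isospectrality (a): for `λ` such that `P⊥(H-λ)P⊥` is invertible on
`Ran P⊥`, `λ` belongs to the spectrum of `H` iff the restriction of `F_P(H-λ)` to `Ran P`
fails to be bijective; equivalently, `H - λ` is bijective iff that restriction is bijective. -/
theorem feshbach_schur_isospectral
    {𝓗 : Type*} [NormedAddCommGroup 𝓗] [InnerProductSpace ℂ 𝓗] [CompleteSpace 𝓗]
    (H P : 𝓗 →L[ℂ] 𝓗) (hP : P ∘L P = P)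
    (Pperp : 𝓗 →L[ℂ] 𝓗) (hPperp : Pperp = 1 - P)
    (lam : ℂ) (R : 𝓗 →L[ℂ] 𝓗)
    (A : 𝓗 →L[ℂ] 𝓗) (hA : A = Pperp ∘L ((H - lam • 1) ∘L Pperp))
    (hR1 : R = Pperp ∘L (R ∘L Pperp))
    (hR2 : ∀ x ∈ Set.range ⇑Pperp, R (A x) = Pperp x)
    (hR3 : ∀ x ∈ Set.range ⇑Pperp, A (R x) = Pperp x)
    (G : 𝓗 →L[ℂ] 𝓗)
    (hG : G = (H - lam • 1) - (H - lam • 1) ∘L (R ∘L (H - lam • 1))) :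
    (lam ∈ spectrum ℂ H ↔
      ¬ Function.Bijective
        (fun x : Set.range ⇑P => (⟨P (G (P x.1)), Set.mem_range_self _⟩ : Set.range ⇑P))) ∧
    (Function.Bijective ⇑(H - lam • 1) ↔
      Function.Bijective
        (fun x : Set.range ⇑P => (⟨P (G (P x.1)), Set.mem_range_self _⟩ : Set.range ⇑P))) := by
  subst hPperp hA hG
  exact feshbach_schur_isospectral_general hP (.of_forall_mem_range hP hR1 hR2 hR3)
end

section
/- Let λ ∈ ℂ be such that P⊥(H − λ)P⊥ is invertible on Ran P⊥, with inverse R⊥(λ). If ψ ∈ 𝓗 satisfies Hψ = λψ, then F_P(H − λ)(Pψ) = 0 and ψ = Q_P(λ)(Pψ). -/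
/-!
Write `T = H - λ`. Since `R` inverts the compression of `T` to `Ran P⊥` and kills `Ran P`, we have
`R T P⊥ = P⊥`. This yields two identities in the ring generated by the operators:
`F = P (1 - T R) T` and `Q + R T = 1`. Both conclusions follow by applying these to a vector
annihilated by `T`; the projection acting on `ψ` is absorbed because `F P = F` and `Q P = Q`.
-/

section Ring

variable {S : Type*} [Ring S] {p t r : S}

/-- The Feshbach–Schur map `F_P(T)` of a ring element `t`, for a projection `p`; the element `r`
stands for the inverse `R⊥` of the complementary compression and is passed explicitly. -/
def feshbachSchurMap (p t r : S) : S :=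
  p * ((t - t * (r * t)) * p)

/-- The operator `Q_P`, which reconstructs a null vector of `t` from its `p`-component. Replacing
`t` by `t - λ` does not change it when `r * p = 0`, so `H` itself may be used for `t`. -/
def feshbachSchurLift (p t r : S) : S :=
  p - r * (t * p)

/-- The one-sided form of the condition defining `R⊥`: `r` vanishes on the range of `p` and is a
left inverse of the compression of `t` to the range of `1 - p`. -/
structure IsCompressionLeftInverse (p t r : S) : Prop where
  mul_proj : r * p = 0
  mul_compression : r * ((1 - p) * (t * (1 - p))) = 1 - p

theorem IsCompressionLeftInverse.mul_mul_compl (h : IsCompressionLeftInverse p t r) :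
    r * (t * (1 - p)) = 1 - p := by
  have mul_compl : r * (1 - p) = r := by rw [mul_sub, mul_one, h.mul_proj, sub_zero]
  rw [← mul_compl, mul_assoc, h.mul_compression]

theorem feshbachSchurMap_mul_proj (hp : IsIdempotentElem p) (t r : S) :
    feshbachSchurMap p t r * p = feshbachSchurMap p t r := by
  simp only [feshbachSchurMap, mul_assoc, hp.eq]

theorem feshbachSchurLift_mul_proj (hp : IsIdempotentElem p) (t r : S) :
    feshbachSchurLift p t r * p = feshbachSchurLift p t r := by
  simp only [feshbachSchurLift, sub_mul, mul_assoc, hp.eq]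

theorem IsCompressionLeftInverse.feshbachSchurLift_add (h : IsCompressionLeftInverse p t r) :
    feshbachSchurLift p t r + r * t = 1 :=
  calc feshbachSchurLift p t r + r * t
      = p + r * (t * (1 - p)) := by rw [feshbachSchurLift]; noncomm_ring
    _ = 1 := by rw [h.mul_mul_compl, add_sub_cancel]

theorem IsCompressionLeftInverse.feshbachSchurMap_eq (h : IsCompressionLeftInverse p t r) :
    feshbachSchurMap p t r = p * (1 - t * r) * t :=
  calc feshbachSchurMap p t r
      = p * (1 - t * r) * t - p * (t * (1 - p) - t * (r * (t * (1 - p)))) := by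
        rw [feshbachSchurMap]; noncomm_ring
    _ = p * (1 - t * r) * t := by rw [h.mul_mul_compl, sub_self, mul_zero, sub_zero]

theorem feshbachSchurLift_sub_smul_one {𝕜 : Type*} [CommSemiring 𝕜] [Algebra 𝕜 S]
    (hrp : r * p = 0) (t : S) (c : 𝕜) :
    feshbachSchurLift p (t - c • 1) r = feshbachSchurLift p t r := by
  simp only [feshbachSchurLift, sub_mul, mul_sub, smul_mul_assoc, mul_smul_comm, one_mul, hrp,
    smul_zero, sub_zero]

end Ring

theorem IsCompressionLeftInverse.of_forall_mem_range {𝕜 E : Type*} [Ring 𝕜] [AddCommGroup E]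
    [Module 𝕜 E] [TopologicalSpace E] [IsTopologicalAddGroup E] {p t r : E →L[𝕜] E}
    (hp : IsIdempotentElem p) (hr : r = (1 - p) * (r * (1 - p)))
    (hinv : ∀ x ∈ Set.range ⇑(1 - p), r (((1 - p) * (t * (1 - p))) x) = (1 - p) x) :
    IsCompressionLeftInverse p t r where
  mul_proj := by
    rw [hr, mul_assoc, mul_assoc, hp.one_sub_mul_self, mul_zero, mul_zero]
  mul_compression := by
    have on_range : r * ((1 - p) * (t * (1 - p))) * (1 - p) = (1 - p) * (1 - p) :=
      ContinuousLinearMap.ext fun x => hinv ((1 - p) x) ⟨x, rfl⟩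
    simpa only [mul_assoc, hp.one_sub.eq] using on_range

section Action

variable {S M : Type*} [Ring S] [AddCommGroup M] [Module S M] {p t r : S} {ψ : M}

theorem IsCompressionLeftInverse.feshbachSchurMap_smul_eq_zero
    (h : IsCompressionLeftInverse p t r) (hp : IsIdempotentElem p) (hψ : t • ψ = 0) :
    feshbachSchurMap p t r • p • ψ = 0 := by
  rw [smul_smul, feshbachSchurMap_mul_proj hp, h.feshbachSchurMap_eq, mul_smul, hψ, smul_zero]

theorem IsCompressionLeftInverse.feshbachSchurLift_smul
    (h : IsCompressionLeftInverse p t r) (hp : IsIdempotentElem p) (hψ : t • ψ = 0) :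
    feshbachSchurLift p t r • p • ψ = ψ := by
  rw [smul_smul, feshbachSchurLift_mul_proj hp, eq_sub_of_add_eq h.feshbachSchurLift_add,
    sub_smul, one_smul, mul_smul, hψ, smul_zero, sub_zero]

theorem feshbach_schur_eigenvector_forward_general {𝕜 : Type*} [CommSemiring 𝕜] [Algebra 𝕜 S]
    [Module 𝕜 M] [IsScalarTower 𝕜 S M] {H : S} {c : 𝕜} (hp : IsIdempotentElem p)
    (hr : IsCompressionLeftInverse p (H - c • 1) r) (hψ : H • ψ = c • ψ) :
    feshbachSchurMap p (H - c • 1) r • p • ψ = 0 ∧ ψ = feshbachSchurLift p H r • p • ψ := by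
  have null : (H - c • (1 : S)) • ψ = 0 := by
    rw [sub_smul, smul_assoc, one_smul, hψ, sub_self]
  refine ⟨hr.feshbachSchurMap_smul_eq_zero hp null, ?_⟩
  rw [← feshbachSchurLift_sub_smul_one hr.mul_proj H c]
  exact (hr.feshbachSchurLift_smul hp null).symm

end Action

/-- Feshbach–Schur map, Theorem 1(b,d) forward direction: if `ψ` is an eigenvector of `H`
with eigenvalue `λ`, then `F_P(H - λ) (Pψ) = 0` and `ψ = Q_P(λ) (Pψ)`. -/
theorem feshbach_schur_eigenvector_forward
    {𝓗 : Type*} [NormedAddCommGroup 𝓗] [InnerProductSpace ℂ 𝓗] [CompleteSpace 𝓗]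
    (H P : 𝓗 →L[ℂ] 𝓗) (hP : P ∘L P = P)
    (Pperp : 𝓗 →L[ℂ] 𝓗) (hPperp : Pperp = 1 - P)
    (lam : ℂ) (R : 𝓗 →L[ℂ] 𝓗)
    (A : 𝓗 →L[ℂ] 𝓗) (hA : A = Pperp ∘L ((H - lam • 1) ∘L Pperp))
    (hR1 : R = Pperp ∘L (R ∘L Pperp))
    (hR2 : ∀ x ∈ Set.range ⇑Pperp, R (A x) = Pperp x)
    (hR3 : ∀ x ∈ Set.range ⇑Pperp, A (R x) = Pperp x)
    (F Q : 𝓗 →L[ℂ] 𝓗)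
    (hF : F = P ∘L (((H - lam • 1) - (H - lam • 1) ∘L (R ∘L (H - lam • 1))) ∘L P))
    (hQ : Q = P - R ∘L (H ∘L P))
    (ψ : 𝓗) (hψ : H ψ = lam • ψ) :
    F (P ψ) = 0 ∧ ψ = Q (P ψ) := by
  subst hPperp hA hF hQ
  have : IsScalarTower ℂ (𝓗 →L[ℂ] 𝓗) 𝓗 := ⟨fun _ _ _ => rfl⟩
  exact feshbach_schur_eigenvector_forward_general hP (.of_forall_mem_range hP hR1 hR2) hψ
end

section
/- Let λ ∈ ℂ be such that P⊥(H − λ)P⊥ is invertible on Ran P⊥, with inverse R⊥(λ), and define the effective Hamiltonian H(λ) := F_P(H − λ) + λP, regarded as an operator on Ran P. Then λ is an eigenvalue of H (i.e. ker(H − λ) ≠ {0}) if and only if λ is an eigenvalue of the restriction of H(λ) to Ran P; equivalently, the eigenvalues of H at points λ where the map is defined are exactly the solutions of the fixed point equations ν(λ) = λ for eigenvalues ν(λ) of H(λ). -/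
/-!
Write `K = H - λ`. Invertibility of `P⊥ K P⊥` gives `R K P⊥ = P⊥`, so `Q = P - R K P` is also
`1 - R K` and hence fixes `ker K` pointwise; and it gives `P⊥ K R = P⊥`, so `P⊥ K Q = 0` and
`K Q = P K Q = F`. As moreover `Q P = Q` and `P Q = P`, the maps `P` and `Q` are mutually inverse
between `ker K` and `ker F ∩ Ran P`. On `Ran P`, the equation `H(λ) φ = λ φ` says exactly `F φ = 0`.
-/

namespace FeshbachSchur

section Ring

variable {𝒜 : Type*} [Ring 𝒜]

/-- `r` is the inverse of `e * k * e` in the corner ring `e𝒜e`. For operators and `e = P⊥`, this is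
invertibility of `P⊥ K P⊥` on `Ran P⊥`, with inverse `r` extended by zero to `Ran P`. -/
structure IsCornerInverse (e k r : 𝒜) : Prop where
  mul_left : e * r = r
  mul_right : r * e = r
  inv_mul : r * (e * k * e) = e
  mul_inv : e * k * e * r = e

/-- The Feshbach–Schur map `F_P(K)`, with `r` standing for the inverse of `P⊥ K P⊥` on `Ran P⊥`. -/
def schurMap (p k r : 𝒜) : 𝒜 :=
  p * (k - k * r * k) * p

/-- The operator `Q_P(λ)`, which reconstructs `ker K` from `ker F_P(K)`. It is written with
`K = H - λ` in place of `H`; the two agree because `R⊥(λ) P = 0`. -/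
def reconstruction (p k r : 𝒜) : 𝒜 :=
  p - r * k * p

namespace IsCornerInverse

variable {e p k r : 𝒜}

theorem isIdempotentElem (h : IsCornerInverse e k r) : IsIdempotentElem e :=
  calc e * e = e * (r * (e * k * e)) := by rw [h.inv_mul]
    _ = e := by rw [← mul_assoc, h.mul_left, h.inv_mul]

theorem inv_mul_mul (h : IsCornerInverse e k r) : r * k * e = e :=
  calc r * k * e = r * e * k * e := by rw [h.mul_right]
    _ = e := by simpa only [mul_assoc] using h.inv_mul

theorem mul_mul_inv (h : IsCornerInverse e k r) : e * k * r = e :=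
  calc e * k * r = e * k * (e * r) := by rw [h.mul_left]
    _ = e := by simpa only [mul_assoc] using h.mul_inv

theorem isIdempotentElem_compl (h : IsCornerInverse (1 - p) k r) : IsIdempotentElem p :=
  IsIdempotentElem.one_sub_iff.mp h.isIdempotentElem

theorem compl_mul_eq_zero (h : IsCornerInverse (1 - p) k r) : p * r = 0 := by
  simpa only [sub_mul, one_mul, sub_eq_self] using h.mul_left

theorem reconstruction_eq_one_sub (h : IsCornerInverse (1 - p) k r) :
    reconstruction p k r = 1 - r * k := by
  have hrk : r * k - r * k * p = 1 - p := by
    simpa only [mul_sub, mul_one] using h.inv_mul_mul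
  calc p - r * k * p = p + (r * k - r * k * p) - r * k := by abel
    _ = 1 - r * k := by rw [hrk, add_sub_cancel]

theorem compl_mul_reconstruction (h : IsCornerInverse (1 - p) k r) :
    p * reconstruction p k r = p := by
  rw [h.reconstruction_eq_one_sub, mul_sub, mul_one, ← mul_assoc, h.compl_mul_eq_zero, zero_mul,
    sub_zero]

theorem reconstruction_mul_compl (h : IsCornerInverse (1 - p) k r) :
    reconstruction p k r * p = reconstruction p k r := by
  rw [reconstruction, sub_mul, mul_assoc _ p p, h.isIdempotentElem_compl.eq]

theorem mul_reconstruction_eq_schurMap (h : IsCornerInverse (1 - p) k r) :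
    k * reconstruction p k r = schurMap p k r := by
  have hcompl : (1 - p) * (k * reconstruction p k r) = 0 := by
    rw [h.reconstruction_eq_one_sub, ← mul_assoc, mul_sub, mul_one, ← mul_assoc, h.mul_mul_inv,
      sub_self]
  calc k * reconstruction p k r = p * (k * reconstruction p k r) := by
        simpa only [sub_mul, one_mul, sub_eq_zero] using hcompl
    _ = p * (k * (reconstruction p k r * p)) := by rw [h.reconstruction_mul_compl]
    _ = schurMap p k r := by
        rw [h.reconstruction_eq_one_sub, schurMap]
        noncomm_ring

end IsCornerInverse

end Ring

section Module

variable {𝕜 M : Type*} [CommRing 𝕜] [AddCommGroup M] [Module 𝕜 M]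

open LinearMap Module.End

theorem isCornerInverse_of_forall_mem_range {E K R : Module.End 𝕜 M} (hE : IsIdempotentElem E)
    (hR : R = E * (R * E)) (hinv_mul : ∀ x ∈ range E, R ((E * (K * E)) x) = E x)
    (hmul_inv : ∀ x ∈ range E, (E * (K * E)) (R x) = E x) : IsCornerInverse E K R := by
  have hER : E * R = R := by rw [hR, ← mul_assoc, hE.eq]
  have hRE : R * E = R := by rw [hR, mul_assoc, mul_assoc, hE.eq]
  refine ⟨hER, hRE, ?_, ?_⟩
  · have hEE : R * (E * (K * E)) * E = E * E := LinearMap.ext fun x ↦ hinv_mul (E x) ⟨x, rfl⟩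
    simpa only [mul_assoc, hE.eq] using hEE
  · have hEE : E * (K * E) * R * E = E * E := LinearMap.ext fun x ↦ hmul_inv (E x) ⟨x, rfl⟩
    simpa only [mul_assoc, hRE, hE.eq] using hEE

/-- The isospectrality of the Feshbach–Schur map: `P` maps `ker K` isomorphically onto
`ker F_P(K) ∩ Ran P`, with inverse `Q_P`. -/
def IsCornerInverse.kerEquiv {P K R : Module.End 𝕜 M} (h : IsCornerInverse (1 - P) K R) :
    ker K ≃ₗ[𝕜] ↥(ker (schurMap P K R) ⊓ range P) :=
  have hker (x : M) (hx : K x = 0) : reconstruction P K R (P x) = x := by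
    rw [← Module.End.mul_apply, h.reconstruction_mul_compl, h.reconstruction_eq_one_sub]
    simp [hx]
  have hschur (x : M) : K (reconstruction P K R x) = schurMap P K R x :=
    LinearMap.congr_fun h.mul_reconstruction_eq_schurMap x
  LinearEquiv.ofLinearMap
    (P.restrict fun x hx ↦ ⟨(hschur (P x)).symm.trans (by rw [hker x hx, hx]), x, rfl⟩)
    ((reconstruction P K R).restrict fun y hy ↦ (hschur y).trans hy.1)
    (by
      ext ⟨_, _, y, rfl⟩
      have hPQP : P * reconstruction P K R * P = P := by
        rw [h.compl_mul_reconstruction, h.isIdempotentElem_compl.eq]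
      exact LinearMap.congr_fun hPQP y)
    (by
      ext ⟨x, hx⟩
      exact hker x hx)

/-- The effective Hamiltonian `H(λ) = F_P(H - λ) + λP`, as an operator on the whole space. -/
def effectiveHamiltonian (H P R : Module.End 𝕜 M) (μ : 𝕜) : Module.End 𝕜 M :=
  schurMap P (H - μ • 1) R + μ • P

theorem effectiveHamiltonian_apply_eq_smul_iff {H P R : Module.End 𝕜 M} {μ : 𝕜} {φ : M}
    (hP : IsIdempotentElem P) (hφ : φ ∈ range P) :
    effectiveHamiltonian H P R μ φ = μ • φ ↔ schurMap P (H - μ • 1) R φ = 0 := by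
  have hPφ : P φ = φ := hP.mem_range_iff.mp hφ
  rw [effectiveHamiltonian, LinearMap.add_apply, LinearMap.smul_apply, hPφ, add_eq_right]

end Module

end FeshbachSchur

open FeshbachSchur in
theorem feshbach_schur_effective_hamiltonian_eigen_general
    {𝕜 M : Type*} [CommRing 𝕜] [AddCommGroup M] [Module 𝕜 M] {H P R : Module.End 𝕜 M} {μ : 𝕜}
    (hR : IsCornerInverse (1 - P) (H - μ • 1) R) :
    (∃ ψ, ψ ≠ 0 ∧ H ψ = μ • ψ) ↔
      ∃ φ ∈ LinearMap.range P, φ ≠ 0 ∧ effectiveHamiltonian H P R μ φ = μ • φ := by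
  have hker : LinearMap.ker (H - μ • 1) ≠ ⊥ ↔
      LinearMap.ker (schurMap P (H - μ • 1) R) ⊓ LinearMap.range P ≠ ⊥ := by
    simpa only [Submodule.nontrivial_iff_ne_bot] using hR.kerEquiv.toEquiv.nontrivial_congr
  calc (∃ ψ, ψ ≠ 0 ∧ H ψ = μ • ψ) ↔ LinearMap.ker (H - μ • 1) ≠ ⊥ := by
        simp [Submodule.ne_bot_iff, sub_eq_zero, and_comm]
    _ ↔ ∃ φ ∈ LinearMap.range P, φ ≠ 0 ∧ schurMap P (H - μ • 1) R φ = 0 := by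
        rw [hker, Submodule.ne_bot_iff]
        exact exists_congr fun φ ↦ by rw [Submodule.mem_inf, LinearMap.mem_ker]; tauto
    _ ↔ ∃ φ ∈ LinearMap.range P, φ ≠ 0 ∧ effectiveHamiltonian H P R μ φ = μ • φ :=
        exists_congr fun φ ↦ and_congr_right fun hφ ↦ and_congr_right' <|
          (effectiveHamiltonian_apply_eq_smul_iff hR.isIdempotentElem_compl hφ).symm

/-- Effective Hamiltonian fixed-point characterization: with `H(λ) := F_P(H-λ) + λP` regarded
as an operator on `Ran P`, the number `λ` is an eigenvalue of `H` iff `λ` is an eigenvalue of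
the restriction of `H(λ)` to `Ran P`. -/
theorem feshbach_schur_effective_hamiltonian_eigen
    {𝓗 : Type*} [NormedAddCommGroup 𝓗] [InnerProductSpace ℂ 𝓗] [CompleteSpace 𝓗]
    (H P : 𝓗 →L[ℂ] 𝓗) (hP : P ∘L P = P)
    (Pperp : 𝓗 →L[ℂ] 𝓗) (hPperp : Pperp = 1 - P)
    (lam : ℂ) (R : 𝓗 →L[ℂ] 𝓗)
    (A : 𝓗 →L[ℂ] 𝓗) (hA : A = Pperp ∘L ((H - lam • 1) ∘L Pperp))
    (hR1 : R = Pperp ∘L (R ∘L Pperp))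
    (hR2 : ∀ x ∈ Set.range ⇑Pperp, R (A x) = Pperp x)
    (hR3 : ∀ x ∈ Set.range ⇑Pperp, A (R x) = Pperp x)
    (F Heff : 𝓗 →L[ℂ] 𝓗)
    (hF : F = P ∘L (((H - lam • 1) - (H - lam • 1) ∘L (R ∘L (H - lam • 1))) ∘L P))
    (hHeff : Heff = F + lam • P) :
    (∃ ψ : 𝓗, ψ ≠ 0 ∧ H ψ = lam • ψ) ↔
    (∃ φ ∈ Set.range ⇑P, φ ≠ 0 ∧ Heff φ = lam • φ) := by
  subst hPperp hA hF hHeff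
  have hP_idem : IsIdempotentElem (P : Module.End ℂ 𝓗) :=
    congrArg ContinuousLinearMap.toLinearMap hP
  exact feshbach_schur_effective_hamiltonian_eigen_general <|
    FeshbachSchur.isCornerInverse_of_forall_mem_range hP_idem.one_sub
      (congrArg ContinuousLinearMap.toLinearMap hR1) hR2 hR3
end

section
/- For every real number m > 0 and every smooth compactly supported function f : ℝ³ → ℂ, one has (1/m)∫_{ℝ³} ‖∇f(x)‖² dx − ∫_{ℝ³} |f(x)|²/‖x‖ dx ≥ −m ∫_{ℝ³} |f(x)|² dx. (This is the quadratic-form version of the operator inequality −(1/m)Δ − 1/|x| ≥ −m, obtained from Hardy's inequality −Δ ≥ 1/(4|x|²).) -/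
/-!
Dilating the variable of integration gives `∫ g(tx) / ‖x‖ dx = t ^ (1 - d) * ∫ g(x) / ‖x‖ dx` in
dimension `d`. Differentiating at `t = 1` yields Euler's identity
`(d - 1) * ∫ g / ‖x‖ = -∫ Dg(x) x / ‖x‖`, which for `g = ‖f‖ ^ 2` has right-hand side
`-2 * ∫ ⟪f, Df(x) x⟫ / ‖x‖ ≤ 2 * ∫ ‖f‖ * ‖Df‖`. Completing the square bounds the form below by
`-m / (d - 1) ^ 2 * ∫ ‖f‖ ^ 2`, without Hardy's inequality. This constant, `-m / 4` on `ℝ³`, is the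
energy of the ground state `exp (-m * ‖x‖ / 2)`, hence sharp.
-/

open MeasureTheory

open Metric Module Set
open scoped RealInnerProductSpace

section Gradient

variable {ι E F : Type*} [Fintype ι] [NormedAddCommGroup E] [InnerProductSpace ℝ E]
  [NormedAddCommGroup F] [NormedSpace ℝ F]

lemma opNorm_sq_le_sum_norm_sq_apply_orthonormalBasis (b : OrthonormalBasis ι ℝ E) (L : E →L[ℝ] F) :
    ‖L‖ ^ 2 ≤ ∑ i, ‖L (b i)‖ ^ 2 := by
  refine (Real.le_sqrt (norm_nonneg L) (by positivity)).1 <|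
    L.opNorm_le_bound (Real.sqrt_nonneg _) fun x ↦ ?_
  calc ‖L x‖ = ‖∑ i, ⟪b i, x⟫ • L (b i)‖ := by
        conv_lhs => rw [← b.sum_repr' x, map_sum]
        simp only [map_smul]
    _ ≤ ∑ i, ‖L (b i)‖ * ‖⟪b i, x⟫‖ :=
        norm_sum_le_of_le _ fun i _ ↦ by rw [norm_smul, mul_comm]
    _ ≤ √(∑ i, ‖L (b i)‖ ^ 2) * √(∑ i, ‖⟪b i, x⟫‖ ^ 2) := Real.sum_mul_le_sqrt_mul_sqrt _ _ _
    _ = √(∑ i, ‖L (b i)‖ ^ 2) * ‖x‖ := by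
        rw [b.sum_sq_norm_inner_right, Real.sqrt_sq (norm_nonneg x)]

end Gradient

section Dilation

variable {E G : Type*} [NormedAddCommGroup E] [NormedSpace ℝ E] [NormedAddCommGroup G]
  [NormedSpace ℝ G] {g : E → G}

lemma exists_norm_fderiv_smul_apply_le_indicator_closedBall (hg : ContDiff ℝ 1 g)
    (hsupp : HasCompactSupport g) {a : ℝ} (ha : 0 < a) :
    ∃ C R : ℝ, ∀ t ≥ a, ∀ x, ‖fderiv ℝ g (t • x) x‖ ≤ (closedBall 0 R).indicator (fun _ ↦ C) x := by
  obtain ⟨r, hr⟩ := hsupp.isBounded.subset_closedBall (0 : E)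
  obtain ⟨C, hC⟩ := (hsupp.fderiv ℝ).exists_bound_of_continuous (hg.continuous_fderiv one_ne_zero)
  refine ⟨C * (r / a), r / a, fun t ht x ↦ ?_⟩
  by_cases hx : x ∈ closedBall 0 (r / a)
  · rw [indicator_of_mem hx]
    exact (fderiv ℝ g (t • x)).le_of_opNorm_le_of_le (hC _) (mem_closedBall_zero_iff.1 hx)
  · have htx : t • x ∉ tsupport g := fun h ↦ hx <| by
      have hnorm : t * ‖x‖ ≤ r := by
        simpa [norm_smul, abs_of_pos (ha.trans_le ht)] using hr h
      rw [mem_closedBall_zero_iff, le_div_iff₀' ha]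
      exact (mul_le_mul_of_nonneg_right ht (norm_nonneg x)).trans hnorm
    simp [indicator_of_notMem hx, fderiv_of_notMem_tsupport ℝ htx]

variable [FiniteDimensional ℝ E] [MeasurableSpace E] [BorelSpace E] {μ : Measure E} {w : E → ℝ}

lemma hasDerivAt_integral_smul_comp_smul (hw : LocallyIntegrable w μ) (hg : ContDiff ℝ 1 g)
    (hsupp : HasCompactSupport g) :
    HasDerivAt (fun t : ℝ ↦ ∫ x, w x • g (t • x) ∂μ) (∫ x, w x • fderiv ℝ g x x ∂μ) 1 := by
  have hw_meas : AEStronglyMeasurable w μ := hw.aestronglyMeasurable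
  have hg_cont := hg.continuous
  have h_fderiv_cont := hg.continuous_fderiv one_ne_zero
  obtain ⟨C, R, hCR⟩ :=
    exists_norm_fderiv_smul_apply_le_indicator_closedBall hg hsupp one_half_pos
  have h_bound_int :
      Integrable (fun x ↦ ‖w x‖ * (closedBall 0 R).indicator (fun _ ↦ C) x) μ := by
    simp only [← indicator_mul_right (closedBall 0 R) (fun x ↦ ‖w x‖) (fun _ ↦ C)]
    exact (integrable_indicator_iff measurableSet_closedBall).2 <|
      (hw.integrableOn_isCompact (isCompact_closedBall 0 R)).norm.mul_const C
  have h := (hasDerivAt_integral_of_dominated_loc_of_deriv_le (μ := μ)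
    (F := fun (t : ℝ) x ↦ w x • g (t • x)) (F' := fun t x ↦ w x • fderiv ℝ g (t • x) x)
    (Ici_mem_nhds one_half_lt_one)
    (.of_forall fun t ↦ hw_meas.smul (by fun_prop : Continuous _).aestronglyMeasurable)
    (by simpa using hw.integrable_smul_right_of_hasCompactSupport hg_cont hsupp)
    (hw_meas.smul ((h_fderiv_cont.comp (continuous_const_smul 1)).clm_apply
      continuous_id).aestronglyMeasurable)
    (.of_forall fun x t ht ↦ by
      rw [norm_smul]
      exact mul_le_mul_of_nonneg_left (hCR t ht x) (norm_nonneg _))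
    h_bound_int
    (.of_forall fun x t _ ↦ by
      have h_line : HasDerivAt (fun s : ℝ ↦ s • x) x t := by
        simpa using (hasDerivAt_id t).smul_const x
      have h_fderiv := (hg.differentiable one_ne_zero (t • x)).hasFDerivAt
      exact (h_fderiv.comp_hasDerivAt t h_line).const_smul (w x))).2
  simpa using h

variable [μ.IsAddHaarMeasure] {p : ℝ}

lemma integral_homogeneous_smul_comp_smul (hw : ∀ t > 0, ∀ x, w (t • x) = t ^ p * w x)
    (g : E → G) {t : ℝ} (ht : 0 < t) :
    ∫ x, w x • g (t • x) ∂μ = t ^ (-(finrank ℝ E + p)) • ∫ x, w x • g x ∂μ := by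
  have hwt (x : E) : w x = t ^ (-p) * w (t • x) := by
    rw [hw t ht, ← mul_assoc, ← Real.rpow_add ht, neg_add_cancel, Real.rpow_zero, one_mul]
  calc ∫ x, w x • g (t • x) ∂μ = ∫ x, t ^ (-p) • w (t • x) • g (t • x) ∂μ :=
        integral_congr_ae <| .of_forall fun x ↦ by
          simp only [smul_smul, ← hwt]
    _ = t ^ (-p) • (t ^ finrank ℝ E)⁻¹ • ∫ x, w x • g x ∂μ := by
        rw [integral_smul, Measure.integral_comp_smul μ (fun x ↦ w x • g x),
          abs_of_pos (by positivity)]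
    _ = t ^ (-(finrank ℝ E + p)) • ∫ x, w x • g x ∂μ := by
        rw [smul_smul, neg_add_rev, Real.rpow_add ht, Real.rpow_neg ht.le (finrank ℝ E : ℝ),
          Real.rpow_natCast]

theorem integral_homogeneous_smul_fderiv_apply_self (hw_int : LocallyIntegrable w μ)
    (hw : ∀ t > 0, ∀ x, w (t • x) = t ^ p * w x) (hg : ContDiff ℝ 1 g)
    (hsupp : HasCompactSupport g) :
    ∫ x, w x • fderiv ℝ g x x ∂μ = -(finrank ℝ E + p) • ∫ x, w x • g x ∂μ := by
  have h_pow : HasDerivAt (fun t : ℝ ↦ t ^ (-(finrank ℝ E + p)) • ∫ x, w x • g x ∂μ)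
      (-(finrank ℝ E + p) • ∫ x, w x • g x ∂μ) 1 := by
    simpa using (Real.hasDerivAt_rpow_const (p := -(finrank ℝ E + p)) (.inl one_ne_zero)).smul_const
      (∫ x, w x • g x ∂μ)
  refine (hasDerivAt_integral_smul_comp_smul hw_int hg hsupp).unique <|
    h_pow.congr_of_eventuallyEq ?_
  filter_upwards [lt_mem_nhds one_pos] with t ht
  exact integral_homogeneous_smul_comp_smul hw g ht

end Dilation

section Coulomb

variable {E F : Type*} [NormedAddCommGroup E] [NormedSpace ℝ E] [NormedAddCommGroup F]

lemma neg_norm_inv_mul_fderiv_norm_sq_apply_self_le [InnerProductSpace ℝ F] {f : E → F} {x : E}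
    (hf : DifferentiableAt ℝ f x) {a : ℝ} (ha : 0 < a) :
    -(‖x‖⁻¹ * fderiv ℝ (fun y ↦ ‖f y‖ ^ 2) x x) ≤ a * ‖fderiv ℝ f x‖ ^ 2 + a⁻¹ * ‖f x‖ ^ 2 := by
  have h_deriv : fderiv ℝ (fun y ↦ ‖f y‖ ^ 2) x x = 2 * ⟪f x, fderiv ℝ f x x⟫ := by
    simpa using DFunLike.congr_fun hf.hasFDerivAt.norm_sq.fderiv x
  have h_inner : -⟪f x, fderiv ℝ f x x⟫ ≤ ‖f x‖ * (‖fderiv ℝ f x‖ * ‖x‖) :=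
    (neg_le_abs _).trans <| (abs_real_inner_le_norm _ _).trans <| by
      gcongr
      exact (fderiv ℝ f x).le_opNorm x
  have h_young : 2 * (‖fderiv ℝ f x‖ * ‖f x‖) ≤ a * ‖fderiv ℝ f x‖ ^ 2 + a⁻¹ * ‖f x‖ ^ 2 := by
    have h := mul_nonneg (inv_nonneg.2 ha.le) (sq_nonneg (a * ‖fderiv ℝ f x‖ - ‖f x‖))
    field_simp at h ⊢
    linarith
  calc -(‖x‖⁻¹ * fderiv ℝ (fun y ↦ ‖f y‖ ^ 2) x x) = 2 * (‖x‖⁻¹ * -⟪f x, fderiv ℝ f x x⟫) := by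
        rw [h_deriv]; ring
    _ ≤ 2 * (‖x‖⁻¹ * (‖f x‖ * (‖fderiv ℝ f x‖ * ‖x‖))) := by gcongr
    _ = 2 * (‖fderiv ℝ f x‖ * ‖f x‖) * (‖x‖⁻¹ * ‖x‖) := by ring
    _ ≤ 2 * (‖fderiv ℝ f x‖ * ‖f x‖) := mul_le_of_le_one_right (by positivity) inv_mul_le_one
    _ ≤ a * ‖fderiv ℝ f x‖ ^ 2 + a⁻¹ * ‖f x‖ ^ 2 := h_young

variable [FiniteDimensional ℝ E] [MeasurableSpace E] [BorelSpace E] {μ : Measure E}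
  [μ.IsAddHaarMeasure]

lemma locallyIntegrable_norm_inv (hE : 1 < finrank ℝ E) :
    LocallyIntegrable (fun x : E ↦ ‖x‖⁻¹) μ := by
  refine locallyIntegrable_of_norm_le_rpow (C := 1) (α := 1) hE.le (mod_cast hE) ?_
    measurable_norm.inv.aestronglyMeasurable
  exact .of_forall fun x ↦ by simp [Real.rpow_neg_one]

lemma integral_norm_inv_smul_fderiv_apply_self [NormedSpace ℝ F]
    (hE : 1 < finrank ℝ E) {g : E → F} (hg : ContDiff ℝ 1 g) (hsupp : HasCompactSupport g) :
    ∫ x, ‖x‖⁻¹ • fderiv ℝ g x x ∂μ = -(finrank ℝ E - 1 : ℝ) • ∫ x, ‖x‖⁻¹ • g x ∂μ := by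
  refine integral_homogeneous_smul_fderiv_apply_self (p := -1) (locallyIntegrable_norm_inv hE)
    (fun t ht x ↦ ?_) hg hsupp
  rw [norm_smul, Real.norm_of_nonneg ht.le, mul_inv, Real.rpow_neg_one]

theorem finrank_sub_one_mul_integral_norm_sq_div_norm_le [InnerProductSpace ℝ F] {f : E → F}
    (hE : 1 < finrank ℝ E) (hf : ContDiff ℝ 1 f) (hsupp : HasCompactSupport f) {a : ℝ}
    (ha : 0 < a) :
    (finrank ℝ E - 1) * ∫ x, ‖f x‖ ^ 2 / ‖x‖ ∂μ ≤
      a * ∫ x, ‖fderiv ℝ f x‖ ^ 2 ∂μ + a⁻¹ * ∫ x, ‖f x‖ ^ 2 ∂μ := by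
  have hg : ContDiff ℝ 1 fun x ↦ ‖f x‖ ^ 2 := hf.norm_sq ℝ
  have hg_supp : HasCompactSupport fun x ↦ ‖f x‖ ^ 2 :=
    hsupp.comp_left (g := fun y : F ↦ ‖y‖ ^ 2) (by simp)
  have h_radial_int : Integrable (fun x ↦ ‖x‖⁻¹ • fderiv ℝ (fun y ↦ ‖f y‖ ^ 2) x x) μ :=
    (locallyIntegrable_norm_inv hE).integrable_smul_right_of_hasCompactSupport
      ((hg.continuous_fderiv one_ne_zero).clm_apply continuous_id)
      ((hg_supp.fderiv ℝ).mono' fun x hx ↦ subset_tsupport _ fun h ↦ hx (by simp [h]))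
  have h_grad_int : Integrable (fun x ↦ a * ‖fderiv ℝ f x‖ ^ 2) μ :=
    (((hf.continuous_fderiv one_ne_zero).norm.pow 2).integrable_of_hasCompactSupport <|
      HasCompactSupport.intro hsupp fun x hx ↦ by simp [fderiv_of_notMem_tsupport ℝ hx]).const_mul a
  have h_sq_int : Integrable (fun x ↦ a⁻¹ * ‖f x‖ ^ 2) μ :=
    (hg.continuous.integrable_of_hasCompactSupport hg_supp).const_mul a⁻¹
  calc (finrank ℝ E - 1) * ∫ x, ‖f x‖ ^ 2 / ‖x‖ ∂μ
      = -∫ x, ‖x‖⁻¹ • fderiv ℝ (fun y ↦ ‖f y‖ ^ 2) x x ∂μ := by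
        rw [integral_norm_inv_smul_fderiv_apply_self hE hg hg_supp, neg_smul, neg_neg]
        simp only [smul_eq_mul, div_eq_inv_mul]
    _ = ∫ x, -(‖x‖⁻¹ * fderiv ℝ (fun y ↦ ‖f y‖ ^ 2) x x) ∂μ := (integral_neg _).symm
    _ ≤ ∫ x, (a * ‖fderiv ℝ f x‖ ^ 2 + a⁻¹ * ‖f x‖ ^ 2) ∂μ :=
        integral_mono h_radial_int.neg (h_grad_int.add h_sq_int) fun x ↦
          neg_norm_inv_mul_fderiv_norm_sq_apply_self_le (hf.differentiable one_ne_zero x) ha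
    _ = a * ∫ x, ‖fderiv ℝ f x‖ ^ 2 ∂μ + a⁻¹ * ∫ x, ‖f x‖ ^ 2 ∂μ := by
        rw [integral_add h_grad_int h_sq_int, integral_const_mul, integral_const_mul]

end Coulomb

section Hydrogen

variable {ι E F : Type*} [Fintype ι] [NormedAddCommGroup E] [InnerProductSpace ℝ E]
  [MeasurableSpace E] [BorelSpace E] {μ : Measure E} [μ.IsAddHaarMeasure]
  [NormedAddCommGroup F] {f : E → F}

lemma integral_norm_fderiv_sq_le_integral_sum [NormedSpace ℝ F] (b : OrthonormalBasis ι ℝ E)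
    (hf : ContDiff ℝ 1 f) (hsupp : HasCompactSupport f) :
    ∫ x, ‖fderiv ℝ f x‖ ^ 2 ∂μ ≤ ∫ x, ∑ i, ‖fderiv ℝ f x (b i)‖ ^ 2 ∂μ := by
  refine integral_mono_of_nonneg (.of_forall fun x ↦ by positivity) ?_
    (.of_forall fun x ↦ opNorm_sq_le_sum_norm_sq_apply_orthonormalBasis b (fderiv ℝ f x))
  have h_cont : Continuous fun x ↦ ∑ i, ‖fderiv ℝ f x (b i)‖ ^ 2 := continuous_finsetSum _ fun i _ ↦
    ((hf.continuous_fderiv one_ne_zero).clm_apply continuous_const).norm.pow 2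
  exact h_cont.integrable_of_hasCompactSupport <|
    HasCompactSupport.intro hsupp fun x hx ↦ by simp [fderiv_of_notMem_tsupport ℝ hx]

theorem hydrogen_form_lower_bound_general [InnerProductSpace ℝ F] (b : OrthonormalBasis ι ℝ E)
    (hE : 1 < finrank ℝ E) {m : ℝ} (hm : 0 < m) (hf : ContDiff ℝ 1 f)
    (hsupp : HasCompactSupport f) :
    -(m / (finrank ℝ E - 1) ^ 2) * ∫ x, ‖f x‖ ^ 2 ∂μ ≤
      (1 / m) * (∫ x, ∑ i, ‖fderiv ℝ f x (b i)‖ ^ 2 ∂μ) - ∫ x, ‖f x‖ ^ 2 / ‖x‖ ∂μ := by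
  have : FiniteDimensional ℝ E := b.toBasis.finiteDimensional_of_finite
  set d : ℝ := finrank ℝ E - 1
  have hd : 0 < d := sub_pos.2 (mod_cast hE)
  have h_bound : d * ∫ x, ‖f x‖ ^ 2 / ‖x‖ ∂μ ≤
      d * ((1 / m) * (∫ x, ∑ i, ‖fderiv ℝ f x (b i)‖ ^ 2 ∂μ)
        + m / d ^ 2 * ∫ x, ‖f x‖ ^ 2 ∂μ) :=
    calc d * ∫ x, ‖f x‖ ^ 2 / ‖x‖ ∂μ
        ≤ d / m * ∫ x, ‖fderiv ℝ f x‖ ^ 2 ∂μ + (d / m)⁻¹ * ∫ x, ‖f x‖ ^ 2 ∂μ :=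
          finrank_sub_one_mul_integral_norm_sq_div_norm_le hE hf hsupp (div_pos hd hm)
      _ ≤ d / m * (∫ x, ∑ i, ‖fderiv ℝ f x (b i)‖ ^ 2 ∂μ)
            + (d / m)⁻¹ * ∫ x, ‖f x‖ ^ 2 ∂μ := by
          gcongr d / m * ?_ + _
          exact integral_norm_fderiv_sq_le_integral_sum b hf hsupp
      _ = d * ((1 / m) * (∫ x, ∑ i, ‖fderiv ℝ f x (b i)‖ ^ 2 ∂μ)
            + m / d ^ 2 * ∫ x, ‖f x‖ ^ 2 ∂μ) := by
          field_simp
  linarith [le_of_mul_le_mul_left h_bound hd]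

end Hydrogen

/-- Quadratic-form version of `-(1/m)Δ - 1/|x| ≥ -m` on ℝ³, obtained from Hardy's
inequality `-Δ ≥ 1/(4|x|²)`. -/
theorem hydrogen_form_lower_bound
    (m : ℝ) (hm : 0 < m)
    (f : EuclideanSpace ℝ (Fin 3) → ℂ)
    (hf : ContDiff ℝ (⊤ : ℕ∞) f) (hsupp : HasCompactSupport f) :
    -m * ∫ x : EuclideanSpace ℝ (Fin 3), ‖f x‖ ^ 2 ≤
      (1 / m) * (∫ x : EuclideanSpace ℝ (Fin 3),
          ∑ i : Fin 3, ‖fderiv ℝ f x (EuclideanSpace.single i 1)‖ ^ 2)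
        - ∫ x : EuclideanSpace ℝ (Fin 3), ‖f x‖ ^ 2 / ‖x‖ := by
  have h_sharp := hydrogen_form_lower_bound_general
    (μ := (volume : Measure (EuclideanSpace ℝ (Fin 3))))
    (EuclideanSpace.basisFun (Fin 3) ℝ) (by simp) hm (hf.of_le (mod_cast le_top)) hsupp
  simp only [EuclideanSpace.basisFun_apply, finrank_euclideanSpace_fin] at h_sharp
  have h_const : -m ≤ -(m / ((3 : ℕ) - 1) ^ 2) := by
    push_cast
    linarith
  exact (mul_le_mul_of_nonneg_right h_const (by positivity)).trans h_sharp
end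

section
/- For every smooth compactly supported function f : ℝ³ × ℝ³ → ℂ, one has ∫_{ℝ³×ℝ³} |f(x,y)|²/‖x − y‖ dx dy ≤ (1/2)∫_{ℝ³×ℝ³} (‖∇_x f(x,y)‖² + ‖∇_y f(x,y)‖²) dx dy − ∫_{ℝ³×ℝ³} (1/‖x‖ + 1/‖y‖)|f(x,y)|² dx dy + 10∫_{ℝ³×ℝ³} |f(x,y)|² dx dy. (This is the quadratic-form version of the operator inequality 1/|x₁ − x₂| ≤ h_{x₁} + h_{x₂} + 10 with h_x := −(1/2)Δ_x − 1/|x|, used to verify the form-boundedness condition for Helium-type ions.) -/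
open MeasureTheory

/-!
For a real `C¹` function `V` and a direction `v`, expanding `0 ≤ ∫ ‖∂ᵥ f + V f‖²` and integrating
the cross term `V ∂ᵥ‖f‖²` by parts gives `∫ (∂ᵥ V - V²) ‖f‖² ≤ ∫ ‖∂ᵥ f‖²`.

Take for `V` the components of a vector field, one field per electron. The unit radial field
`z / ‖z‖` on `ℝᵈ` has divergence `(d - 1) / ‖z‖`, so the field
`Z x / ‖x‖ + (κ / 2) (x - y) / ‖x - y‖` for the electron at `x`, together with its mirror image for
the electron at `y`, has divergence `(d - 1) (Z / ‖x‖ + Z / ‖y‖ + κ / ‖x - y‖)`, while its squared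
length is at most `2 (Z + κ / 2)²`.
For `d = 3` and `Z = κ = 1` this is the claim, with `9 / 4` in place of `10`.

The radial field is regularized to `z / √(‖z‖² + ε)`, and Fatou's lemma removes `ε`.
-/

open Filter Topology
open scoped InnerProductSpace

lemma continuous_fderiv_apply_const {X F : Type*} [NormedAddCommGroup X] [NormedSpace ℝ X]
    [NormedAddCommGroup F] [NormedSpace ℝ F] {g : X → F} (hg : ContDiff ℝ 1 g) (v : X) :
    Continuous (fun p => fderiv ℝ g p v) :=
  (hg.continuous_fderiv one_ne_zero).clm_apply continuous_const

section Integrability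

variable {X F : Type*} [MeasurableSpace X] [NormedAddCommGroup F] {g : X → F}

lemma integrable_mul_norm_sq [TopologicalSpace X] [OpensMeasurableSpace X] {μ : Measure X}
    [IsFiniteMeasureOnCompacts μ] {c : X → ℝ} (hc : Continuous c) (hg : Continuous g)
    (hs : HasCompactSupport g) : Integrable (fun p => c p * ‖g p‖ ^ 2) μ := by
  refine (hc.mul (hg.norm.pow 2)).integrable_of_hasCompactSupport (hs.mono fun p hp hgp => hp ?_)
  simp [hgp]

lemma integrable_norm_sq [TopologicalSpace X] [OpensMeasurableSpace X] {μ : Measure X}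
    [IsFiniteMeasureOnCompacts μ] (hg : Continuous g) (hs : HasCompactSupport g) :
    Integrable (fun p => ‖g p‖ ^ 2) μ := by
  simpa using integrable_mul_norm_sq (μ := μ) (continuous_const (y := (1 : ℝ))) hg hs

variable [NormedAddCommGroup X] [NormedSpace ℝ X] [OpensMeasurableSpace X] {μ : Measure X}
  [IsFiniteMeasureOnCompacts μ]

lemma integrable_norm_fderiv_sq [NormedSpace ℝ F] (hg : ContDiff ℝ 1 g) (hs : HasCompactSupport g)
    (v : X) : Integrable (fun p => ‖fderiv ℝ g p v‖ ^ 2) μ :=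
  integrable_norm_sq (continuous_fderiv_apply_const hg v) (hs.fderiv_apply ℝ v)

lemma integrable_mul_inner_fderiv [InnerProductSpace ℝ F] {V : X → ℝ} (hV : Continuous V)
    (hg : ContDiff ℝ 1 g) (hs : HasCompactSupport g) (v : X) :
    Integrable (fun p => V p * (2 * ⟪g p, fderiv ℝ g p v⟫_ℝ)) μ := by
  have hdg := continuous_fderiv_apply_const hg v
  refine (hV.mul (continuous_const.mul (hg.continuous.inner hdg))).integrable_of_hasCompactSupport
    (hs.mono fun p hp hgp => hp ?_)
  simp [hgp]

end Integrability

section CompletingTheSquare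

variable {X F : Type*} [NormedAddCommGroup X] [NormedSpace ℝ X] [FiniteDimensional ℝ X]
  [MeasurableSpace X] [BorelSpace X] {μ : Measure X} [μ.IsAddHaarMeasure]
  [NormedAddCommGroup F] [InnerProductSpace ℝ F] {g : X → F}

lemma integral_mul_inner_fderiv {V : X → ℝ} (hV : ContDiff ℝ 1 V) (hg : ContDiff ℝ 1 g)
    (hs : HasCompactSupport g) (v : X) :
    ∫ p, V p * (2 * ⟪g p, fderiv ℝ g p v⟫_ℝ) ∂μ = -∫ p, fderiv ℝ V p v * ‖g p‖ ^ 2 ∂μ := by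
  have fderiv_norm_sq (p : X) :
      fderiv ℝ (fun p => ‖g p‖ ^ 2) p v = 2 * ⟪g p, fderiv ℝ g p v⟫_ℝ := by
    simp [((hg.differentiable one_ne_zero p).hasFDerivAt.norm_sq).fderiv]
  have hdV := continuous_fderiv_apply_const hV v
  simp only [← fderiv_norm_sq]
  refine integral_mul_fderiv_eq_neg_fderiv_mul_of_integrable
    (integrable_mul_norm_sq hdV hg.continuous hs) ?_
    (integrable_mul_norm_sq hV.continuous hg.continuous hs)
    (fun p _ => hV.differentiable one_ne_zero p)
    (fun p _ => (hg.norm_sq ℝ).differentiable one_ne_zero p)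
  simpa only [fderiv_norm_sq] using integrable_mul_inner_fderiv hV.continuous hg hs v

lemma integral_fderiv_sub_sq_mul_norm_sq_le {V : X → ℝ} (hV : ContDiff ℝ 1 V)
    (hg : ContDiff ℝ 1 g) (hs : HasCompactSupport g) (v : X) :
    ∫ p, (fderiv ℝ V p v - V p ^ 2) * ‖g p‖ ^ 2 ∂μ ≤ ∫ p, ‖fderiv ℝ g p v‖ ^ 2 ∂μ := by
  have expand_sq (p : X) : ‖fderiv ℝ g p v + V p • g p‖ ^ 2 =
      ‖fderiv ℝ g p v‖ ^ 2 + V p * (2 * ⟪g p, fderiv ℝ g p v⟫_ℝ) + V p ^ 2 * ‖g p‖ ^ 2 := by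
    rw [norm_add_sq_real, inner_smul_right, norm_smul, mul_pow, Real.norm_eq_abs, sq_abs,
      real_inner_comm]
    ring
  have hdV := continuous_fderiv_apply_const hV v
  have int_grad := integrable_norm_fderiv_sq (μ := μ) hg hs v
  have int_cross := integrable_mul_inner_fderiv (μ := μ) hV.continuous hg hs v
  have int_sq : Integrable (fun p => V p ^ 2 * ‖g p‖ ^ 2) μ :=
    integrable_mul_norm_sq (hV.continuous.pow 2) hg.continuous hs
  have int_deriv := integrable_mul_norm_sq (μ := μ) hdV hg.continuous hs
  have nonneg : 0 ≤ ∫ p, ‖fderiv ℝ g p v + V p • g p‖ ^ 2 ∂μ :=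
    integral_nonneg fun p => by positivity
  simp only [expand_sq] at nonneg
  rw [integral_add (int_grad.fun_add int_cross) int_sq, integral_add int_grad int_cross,
    integral_mul_inner_fderiv hV hg hs] at nonneg
  simp only [sub_mul]
  rw [integral_sub int_deriv int_sq]
  linarith

lemma integral_mul_norm_sq_le_of_le_sum_fderiv_sub_sq {ι : Type*} [Fintype ι] {c : X → ℝ}
    {V : ι → X → ℝ} {v : ι → X} (hc : Continuous c) (hV : ∀ i, ContDiff ℝ 1 (V i))
    (hcV : ∀ p, c p ≤ ∑ i, (fderiv ℝ (V i) p (v i) - V i p ^ 2))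
    (hg : ContDiff ℝ 1 g) (hs : HasCompactSupport g) :
    ∫ p, c p * ‖g p‖ ^ 2 ∂μ ≤ ∫ p, ∑ i, ‖fderiv ℝ g p (v i)‖ ^ 2 ∂μ := by
  have int_riccati (i : ι) :
      Integrable (fun p => (fderiv ℝ (V i) p (v i) - V i p ^ 2) * ‖g p‖ ^ 2) μ :=
    integrable_mul_norm_sq
      ((continuous_fderiv_apply_const (hV i) (v i)).sub ((hV i).continuous.pow 2)) hg.continuous hs
  calc ∫ p, c p * ‖g p‖ ^ 2 ∂μ
      ≤ ∫ p, ∑ i, (fderiv ℝ (V i) p (v i) - V i p ^ 2) * ‖g p‖ ^ 2 ∂μ := by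
        refine integral_mono (integrable_mul_norm_sq hc hg.continuous hs)
          (integrable_finsetSum _ fun i _ => int_riccati i) fun p => ?_
        simp only [← Finset.sum_mul]
        exact mul_le_mul_of_nonneg_right (hcV p) (by positivity)
    _ = ∑ i, ∫ p, (fderiv ℝ (V i) p (v i) - V i p ^ 2) * ‖g p‖ ^ 2 ∂μ :=
        integral_finsetSum _ fun i _ => int_riccati i
    _ ≤ ∑ i, ∫ p, ‖fderiv ℝ g p (v i)‖ ^ 2 ∂μ :=
        Finset.sum_le_sum fun i _ => integral_fderiv_sub_sq_mul_norm_sq_le (hV i) hg hs (v i)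
    _ = ∫ p, ∑ i, ‖fderiv ℝ g p (v i)‖ ^ 2 ∂μ :=
        (integral_finsetSum _ fun i _ => integrable_norm_fderiv_sq hg hs (v i)).symm

end CompletingTheSquare

section RegularizedFields

variable {ι E : Type*} [NormedAddCommGroup E] {ε Z κ : ℝ}

/-- The Coulomb potential `1 / ‖z‖`, regularized so as to vanish at `z = 0`. Since `1 / 0 = 0`, it
then converges to `1 / ‖z‖` at every point as `ε → 0`. -/
noncomputable def regCoulomb (ε : ℝ) (z : E) : ℝ := ‖z‖ / (‖z‖ ^ 2 + ε)

lemma regCoulomb_nonneg (hε : 0 ≤ ε) (z : E) : 0 ≤ regCoulomb ε z := by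
  unfold regCoulomb; positivity

lemma regCoulomb_sub_comm (ε : ℝ) (x y : E) : regCoulomb ε (x - y) = regCoulomb ε (y - x) := by
  rw [regCoulomb, norm_sub_rev, regCoulomb]

lemma continuous_regCoulomb (hε : 0 < ε) : Continuous (regCoulomb ε : E → ℝ) :=
  continuous_norm.div₀ (by fun_prop) fun z => by positivity

lemma tendsto_regCoulomb (z : E) : Tendsto (regCoulomb · z) (𝓝 0) (𝓝 (1 / ‖z‖)) := by
  rcases eq_or_ne z 0 with rfl | hz
  · simp [regCoulomb]
  · have hz' := norm_ne_zero_iff.2 hz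
    have cont : ContinuousAt (regCoulomb · z) 0 :=
      continuousAt_const.div₀ (by fun_prop) (by simpa using hz')
    have value_zero : regCoulomb 0 z = 1 / ‖z‖ := by
      rw [regCoulomb, add_zero]; field_simp
    exact value_zero ▸ cont.tendsto

variable [InnerProductSpace ℝ E]

/-- The unit radial field `z / ‖z‖`, regularized at the origin. -/
noncomputable def regUnitField (ε : ℝ) (z : E) : E := (√(‖z‖ ^ 2 + ε))⁻¹ • z

lemma hasFDerivAt_regUnitField (hε : 0 < ε) (z : E) :
    HasFDerivAt (regUnitField ε)
      ((√(‖z‖ ^ 2 + ε))⁻¹ • ContinuousLinearMap.id ℝ E -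
        (√(‖z‖ ^ 2 + ε))⁻¹ ^ 3 • (innerSL ℝ z).smulRight z) z := by
  have pos : 0 < ‖z‖ ^ 2 + ε := by positivity
  have sqrt_pos := Real.sqrt_pos.2 pos
  have deriv_norm_sq : HasFDerivAt (fun z : E => ‖z‖ ^ 2 + ε) (2 • innerSL ℝ z) z :=
    (hasStrictFDerivAt_norm_sq z).hasFDerivAt.add_const ε
  refine (((hasDerivAt_inv sqrt_pos.ne').comp_hasFDerivAt z
    (deriv_norm_sq.sqrt pos.ne')).smul (hasFDerivAt_id z)).congr_fderiv ?_
  ext w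
  have coeff : -(√(‖z‖ ^ 2 + ε) ^ 2)⁻¹ * (1 / (2 * √(‖z‖ ^ 2 + ε))) * (2 * ⟪z, w⟫_ℝ) =
      -((√(‖z‖ ^ 2 + ε))⁻¹ ^ 3 * ⟪z, w⟫_ℝ) := by
    field_simp
  simpa [smul_smul, sub_eq_add_neg, ← neg_smul] using congrArg (· • z) coeff

lemma contDiff_regUnitField (hε : 0 < ε) {n : WithTop ℕ∞} :
    ContDiff ℝ n (regUnitField ε : E → E) := by
  have pos (z : E) : 0 < ‖z‖ ^ 2 + ε := by positivity
  exact ((((contDiff_norm_sq ℝ).add contDiff_const).sqrt fun z => (pos z).ne').inv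
    fun z => (Real.sqrt_pos.2 (pos z)).ne').smul contDiff_id

lemma norm_regUnitField_le_one (hε : 0 ≤ ε) (z : E) : ‖regUnitField ε z‖ ≤ 1 := by
  rw [regUnitField, norm_smul, norm_inv, Real.norm_of_nonneg (Real.sqrt_nonneg _),
    inv_mul_eq_div]
  exact div_le_one_of_le₀ (Real.le_sqrt_of_sq_le (by linarith)) (Real.sqrt_nonneg _)

variable [Fintype ι] (b : OrthonormalBasis ι ℝ E)

lemma sum_inner_fderiv_regUnitField (hε : 0 < ε) (z : E) :
    ∑ i, ⟪b i, fderiv ℝ (regUnitField ε) z (b i)⟫_ℝ =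
      Fintype.card ι * (√(‖z‖ ^ 2 + ε))⁻¹ - (√(‖z‖ ^ 2 + ε))⁻¹ ^ 3 * ‖z‖ ^ 2 := by
  rw [(hasFDerivAt_regUnitField hε z).fderiv, ← b.sum_sq_inner_left z, Finset.mul_sum]
  simp [inner_sub_right, inner_smul_right, real_inner_comm z, sq]

lemma sub_one_mul_regCoulomb_le_sum_inner_fderiv_regUnitField (hε : 0 < ε) (z : E) :
    (Fintype.card ι - 1) * regCoulomb ε z ≤
      ∑ i, ⟪b i, fderiv ℝ (regUnitField ε) z (b i)⟫_ℝ := by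
  rw [sum_inner_fderiv_regUnitField b hε]
  have pos : 0 < ‖z‖ ^ 2 + ε := by positivity
  have regCoulomb_eq : regCoulomb ε z = ‖z‖ * (√(‖z‖ ^ 2 + ε))⁻¹ ^ 2 := by
    rw [inv_pow, Real.sq_sqrt pos.le]; rfl
  have sqrt_pos := Real.sqrt_pos.2 pos
  have norm_le_sqrt : ‖z‖ ≤ √(‖z‖ ^ 2 + ε) := Real.le_sqrt_of_sq_le (by linarith)
  rw [regCoulomb_eq]
  set s := √(‖z‖ ^ 2 + ε)
  have factorization : Fintype.card ι * s⁻¹ - s⁻¹ ^ 3 * ‖z‖ ^ 2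
      - (Fintype.card ι - 1) * (‖z‖ * s⁻¹ ^ 2) =
      (s - ‖z‖) * (Fintype.card ι * s + ‖z‖) * s⁻¹ ^ 3 := by
    field_simp
    ring
  have : 0 ≤ (s - ‖z‖) * (Fintype.card ι * s + ‖z‖) * s⁻¹ ^ 3 :=
    mul_nonneg (mul_nonneg (sub_nonneg.2 norm_le_sqrt) (by positivity)) (by positivity)
  linarith

/-- The field attached to an electron at `x`: it points away from the nucleus at the origin, with
weight `Z`, and away from the other electron at `y`, with weight `κ / 2`. Each electron thus
carries half of the repulsion. -/
noncomputable def electronField (ε Z κ : ℝ) (x y : E) : E :=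
  Z • regUnitField ε x + (κ / 2) • regUnitField ε (x - y)

lemma contDiff_electronField (hε : 0 < ε) {n : WithTop ℕ∞} :
    ContDiff ℝ n (fun p : E × E => electronField ε Z κ p.1 p.2) :=
  (((contDiff_regUnitField hε).comp contDiff_fst).const_smul Z).add
    (((contDiff_regUnitField hε).comp (contDiff_fst.sub contDiff_snd)).const_smul (κ / 2))

lemma norm_electronField_le (hε : 0 ≤ ε) (hZ : 0 ≤ Z) (hκ : 0 ≤ κ) (x y : E) :
    ‖electronField ε Z κ x y‖ ≤ Z + κ / 2 := by
  refine (norm_add_le _ _).trans ?_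
  rw [norm_smul, norm_smul, Real.norm_of_nonneg hZ, Real.norm_of_nonneg (by positivity)]
  gcongr
  · exact mul_le_of_le_one_right hZ (norm_regUnitField_le_one hε x)
  · exact mul_le_of_le_one_right (by positivity) (norm_regUnitField_le_one hε (x - y))

lemma fderiv_inner_electronField (hε : 0 < ε) (x y v : E) :
    fderiv ℝ (fun x => ⟪v, electronField ε Z κ x y⟫_ℝ) x v =
      Z * ⟪v, fderiv ℝ (regUnitField ε) x v⟫_ℝ +
        κ / 2 * ⟪v, fderiv ℝ (regUnitField ε) (x - y) v⟫_ℝ := by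
  have hd (z : E) : HasFDerivAt (regUnitField ε) _ z :=
    ((contDiff_regUnitField hε).differentiable one_ne_zero z).hasFDerivAt
  have deriv_field : HasFDerivAt (fun x => electronField ε Z κ x y) _ x :=
    ((hd x).const_smul Z).add
      (((hd (x - y)).comp x ((hasFDerivAt_id x).sub_const y)).const_smul (κ / 2))
  rw [((hasFDerivAt_const v x).inner ℝ deriv_field).fderiv]
  simp [inner_add_right, inner_smul_right]

lemma sub_le_sum_fderiv_inner_electronField_sub_sq (hε : 0 < ε) (hZ : 0 ≤ Z) (hκ : 0 ≤ κ)
    (x y : E) :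
    (Fintype.card ι - 1) * (Z * regCoulomb ε x + κ / 2 * regCoulomb ε (x - y)) - (Z + κ / 2) ^ 2 ≤
      ∑ i, (fderiv ℝ (fun x => ⟪b i, electronField ε Z κ x y⟫_ℝ) x (b i) -
        ⟪b i, electronField ε Z κ x y⟫_ℝ ^ 2) := by
  have field_sq_le : ‖electronField ε Z κ x y‖ ^ 2 ≤ (Z + κ / 2) ^ 2 :=
    pow_le_pow_left₀ (norm_nonneg _) (norm_electronField_le hε.le hZ hκ x y) 2
  have div_nucleus := mul_le_mul_of_nonneg_left
    (sub_one_mul_regCoulomb_le_sum_inner_fderiv_regUnitField b hε x) hZ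
  have div_electron := mul_le_mul_of_nonneg_left
    (sub_one_mul_regCoulomb_le_sum_inner_fderiv_regUnitField b hε (x - y))
    (by positivity : 0 ≤ κ / 2)
  simp only [fderiv_inner_electronField hε]
  rw [Finset.sum_sub_distrib, Finset.sum_add_distrib, ← Finset.mul_sum, ← Finset.mul_sum,
    b.sum_sq_inner_right]
  linarith

end RegularizedFields

section PartialDerivatives

variable {E F G : Type*} [NormedAddCommGroup E] [NormedSpace ℝ E] [NormedAddCommGroup F]
  [NormedSpace ℝ F] [NormedAddCommGroup G] [NormedSpace ℝ G] {f : E × F → G} {p : E × F}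

lemma fderiv_comp_prodMk_left_apply (hf : DifferentiableAt ℝ f p) (v : E) :
    fderiv ℝ (fun x => f (x, p.2)) p.1 v = fderiv ℝ f p (v, 0) := by
  have h : HasFDerivAt (fun x => f (x, p.2)) _ p.1 :=
    hf.hasFDerivAt.comp p.1 (hasFDerivAt_prodMk_left p.1 p.2)
  simp [h.fderiv]

lemma fderiv_comp_prodMk_right_apply (hf : DifferentiableAt ℝ f p) (v : F) :
    fderiv ℝ (fun y => f (p.1, y)) p.2 v = fderiv ℝ f p (0, v) := by
  have h : HasFDerivAt (fun y => f (p.1, y)) _ p.2 :=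
    hf.hasFDerivAt.comp p.2 (hasFDerivAt_prodMk_right p.1 p.2)
  simp [h.fderiv]

end PartialDerivatives

lemma integrable_and_integral_le_of_tendsto {α : Type*} [MeasurableSpace α] {μ : Measure α}
    {G : ℕ → α → ℝ} {g : α → ℝ} {C : ℝ} (hG : ∀ n, Integrable (G n) μ)
    (hG_nonneg : ∀ n, 0 ≤ᵐ[μ] G n) (hG_le : ∀ n, ∫ a, G n a ∂μ ≤ C)
    (hlim : ∀ᵐ a ∂μ, Tendsto (fun n => G n a) atTop (𝓝 (g a))) :
    Integrable g μ ∧ ∫ a, g a ∂μ ≤ C := by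
  have meas : AEStronglyMeasurable g μ :=
    aestronglyMeasurable_of_tendsto_ae atTop (fun n => (hG n).1) hlim
  have nonneg : 0 ≤ᵐ[μ] g := by
    filter_upwards [hlim, ae_all_iff.2 hG_nonneg] with a ha h0 using ge_of_tendsto' ha h0
  have C_nonneg : 0 ≤ C := (integral_nonneg_of_ae (hG_nonneg 0)).trans (hG_le 0)
  have lintegral_le : ∫⁻ a, ENNReal.ofReal (g a) ∂μ ≤ ENNReal.ofReal C := by
    calc ∫⁻ a, ENNReal.ofReal (g a) ∂μ
        = ∫⁻ a, liminf (fun n => ENNReal.ofReal (G n a)) atTop ∂μ :=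
          lintegral_congr_ae <| hlim.mono fun a ha =>
            ((ENNReal.tendsto_ofReal ha).liminf_eq).symm
      _ ≤ liminf (fun n => ∫⁻ a, ENNReal.ofReal (G n a) ∂μ) atTop :=
          lintegral_liminf_le' fun n => (hG n).1.aemeasurable.ennreal_ofReal
      _ ≤ ENNReal.ofReal C :=
          liminf_le_of_frequently_le' <| .of_forall fun n => by
            rw [← ofReal_integral_eq_lintegral_ofReal (hG n) (hG_nonneg n)]
            exact ENNReal.ofReal_le_ofReal (hG_le n)
  refine ⟨⟨meas, ?_⟩, ?_⟩
  · rw [hasFiniteIntegral_iff_ofReal nonneg]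
    exact lintegral_le.trans_lt ENNReal.ofReal_lt_top
  · rw [integral_eq_lintegral_of_nonneg_ae nonneg meas]
    exact ENNReal.toReal_le_of_le_ofReal C_nonneg lintegral_le

section PairPotential

variable {E : Type*} [NormedAddCommGroup E] {φ : E → ℝ} {Z κ : ℝ}

/-- The strengths of the interactions between two electrons and a nucleus of charge `Z` at the
origin, added up with positive signs, where `φ` is the pair interaction and `κ` the coupling
between the electrons. -/
def pairPotential (φ : E → ℝ) (Z κ : ℝ) (p : E × E) : ℝ :=
  Z * (φ p.1 + φ p.2) + κ * φ (p.1 - p.2)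

lemma pairPotential_nonneg (hφ : ∀ z, 0 ≤ φ z) (hZ : 0 ≤ Z) (hκ : 0 ≤ κ) (p : E × E) :
    0 ≤ pairPotential φ Z κ p :=
  add_nonneg (mul_nonneg hZ (add_nonneg (hφ _) (hφ _))) (mul_nonneg hκ (hφ _))

lemma continuous_pairPotential (hφ : Continuous φ) : Continuous (pairPotential φ Z κ) := by
  unfold pairPotential; fun_prop

lemma tendsto_pairPotential {α : Type*} {l : Filter α} {Φ : α → E → ℝ}
    (hΦ : ∀ z, Tendsto (Φ · z) l (𝓝 (φ z))) (p : E × E) :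
    Tendsto (fun a => pairPotential (Φ a) Z κ p) l (𝓝 (pairPotential φ Z κ p)) :=
  (((hΦ p.1).add (hΦ p.2)).const_mul Z).add ((hΦ (p.1 - p.2)).const_mul κ)

end PairPotential

section TwoElectrons

variable {ι E F : Type*} [Fintype ι] [NormedAddCommGroup E] [InnerProductSpace ℝ E]
  [NormedAddCommGroup F] [InnerProductSpace ℝ F] {f : E × E → F} {ε Z κ : ℝ}

/-- The squared length `‖∇ₓ f‖² + ‖∇_y f‖²` of the gradient at `p = (x, y)`, computed in the
orthonormal basis `b`. -/
noncomputable def gradNormSq (b : OrthonormalBasis ι ℝ E) (f : E × E → F) (p : E × E) : ℝ :=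
  ∑ i, ‖fderiv ℝ (fun x => f (x, p.2)) p.1 (b i)‖ ^ 2 +
    ∑ i, ‖fderiv ℝ (fun y => f (p.1, y)) p.2 (b i)‖ ^ 2

variable (b : OrthonormalBasis ι ℝ E)

lemma sum_norm_fderiv_prod_basis_sq {p : E × E} (hf : DifferentiableAt ℝ f p) :
    ∑ k, ‖fderiv ℝ f p (b.toBasis.prod b.toBasis k)‖ ^ 2 = gradNormSq b f p := by
  simp [gradNormSq, fderiv_comp_prodMk_left_apply hf, fderiv_comp_prodMk_right_apply hf]

/-- The fields of the two electrons, as a vector field on the configuration space `E × E` given by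
its components in the basis `b.toBasis.prod b.toBasis`. -/
noncomputable def pairField (ε Z κ : ℝ) : ι ⊕ ι → E × E → ℝ :=
  Sum.elim (fun i p => ⟪b i, electronField ε Z κ p.1 p.2⟫_ℝ)
    (fun i p => ⟪b i, electronField ε Z κ p.2 p.1⟫_ℝ)

lemma contDiff_pairField (hε : 0 < ε) {n : WithTop ℕ∞} :
    ∀ k, ContDiff ℝ n (pairField b ε Z κ k)
  | .inl _ => contDiff_const.inner ℝ (contDiff_electronField hε)
  | .inr _ => contDiff_const.inner ℝ
      ((contDiff_electronField hε).comp (contDiff_snd.prodMk contDiff_fst))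

lemma pairPotential_sub_le_sum_fderiv_pairField_sub_sq (hε : 0 < ε) (hZ : 0 ≤ Z) (hκ : 0 ≤ κ)
    (p : E × E) :
    (Fintype.card ι - 1) * pairPotential (regCoulomb ε) Z κ p - 2 * (Z + κ / 2) ^ 2 ≤
      ∑ k, (fderiv ℝ (pairField b ε Z κ k) p (b.toBasis.prod b.toBasis k) -
        pairField b ε Z κ k p ^ 2) := by
  have first := sub_le_sum_fderiv_inner_electronField_sub_sq b hε hZ hκ p.1 p.2
  have second := sub_le_sum_fderiv_inner_electronField_sub_sq b hε hZ hκ p.2 p.1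
  have differentiable (k : ι ⊕ ι) : DifferentiableAt ℝ (pairField b ε Z κ k) p :=
    (contDiff_pairField b hε k).differentiable one_ne_zero p
  have left (i : ι) :
      fderiv ℝ (pairField b ε Z κ (.inl i)) p (b.toBasis.prod b.toBasis (.inl i)) =
        fderiv ℝ (fun x => ⟪b i, electronField ε Z κ x p.2⟫_ℝ) p.1 (b i) := by
    simpa [pairField] using (fderiv_comp_prodMk_left_apply (differentiable (.inl i)) (b i)).symm
  have right (i : ι) :
      fderiv ℝ (pairField b ε Z κ (.inr i)) p (b.toBasis.prod b.toBasis (.inr i)) =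
        fderiv ℝ (fun y => ⟪b i, electronField ε Z κ y p.1⟫_ℝ) p.2 (b i) := by
    simpa [pairField] using (fderiv_comp_prodMk_right_apply (differentiable (.inr i)) (b i)).symm
  rw [Fintype.sum_sum_type]
  simp only [left, right]
  refine le_of_eq_of_le ?_ (add_le_add first second)
  rw [pairPotential, regCoulomb_sub_comm ε p.2 p.1]
  ring

variable [MeasurableSpace E] [BorelSpace E] {μ : Measure E} [μ.IsAddHaarMeasure]

lemma sub_one_mul_integral_pairPotential_regCoulomb_le (hε : 0 < ε) (hZ : 0 ≤ Z) (hκ : 0 ≤ κ)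
    (hf : ContDiff ℝ 1 f) (hs : HasCompactSupport f) :
    (Fintype.card ι - 1) * ∫ p, pairPotential (regCoulomb ε) Z κ p * ‖f p‖ ^ 2 ∂μ.prod μ ≤
      ∫ p, gradNormSq b f p ∂μ.prod μ + 2 * (Z + κ / 2) ^ 2 * ∫ p, ‖f p‖ ^ 2 ∂μ.prod μ := by
  have : FiniteDimensional ℝ E := b.toBasis.finiteDimensional_of_finite
  have continuous_pot : Continuous (pairPotential (regCoulomb ε : E → ℝ) Z κ) :=
    continuous_pairPotential (continuous_regCoulomb hε)
  have bound := integral_mul_norm_sq_le_of_le_sum_fderiv_sub_sq (μ := μ.prod μ)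
    (by fun_prop) (contDiff_pairField b hε)
    (pairPotential_sub_le_sum_fderiv_pairField_sub_sq b hε hZ hκ) hf hs
  simp only [sum_norm_fderiv_prod_basis_sq b (hf.differentiable one_ne_zero _), sub_mul (_ * _),
    mul_assoc (_ - _)] at bound
  rw [integral_sub ((integrable_mul_norm_sq continuous_pot hf.continuous hs).const_mul _)
    ((integrable_norm_sq hf.continuous hs).const_mul _), integral_const_mul,
    integral_const_mul] at bound
  linarith

lemma integrable_pairPotential_and_sub_one_mul_integral_le (hι : 2 ≤ Fintype.card ι) (hZ : 0 ≤ Z)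
    (hκ : 0 ≤ κ) (hf : ContDiff ℝ 1 f) (hs : HasCompactSupport f) :
    Integrable (fun p => pairPotential (1 / ‖·‖) Z κ p * ‖f p‖ ^ 2) (μ.prod μ) ∧
    (Fintype.card ι - 1) * ∫ p, pairPotential (1 / ‖·‖) Z κ p * ‖f p‖ ^ 2 ∂μ.prod μ ≤
      ∫ p, gradNormSq b f p ∂μ.prod μ + 2 * (Z + κ / 2) ^ 2 * ∫ p, ‖f p‖ ^ 2 ∂μ.prod μ := by
  have : FiniteDimensional ℝ E := b.toBasis.finiteDimensional_of_finite
  have hd : (0 : ℝ) < Fintype.card ι - 1 := by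
    have : (2 : ℝ) ≤ Fintype.card ι := by exact_mod_cast hι
    linarith
  obtain ⟨ε, -, hε, hε_lim⟩ := exists_seq_strictAnti_tendsto (0 : ℝ)
  rw [← le_div_iff₀' hd]
  refine integrable_and_integral_le_of_tendsto
    (G := fun n p => pairPotential (regCoulomb (ε n)) Z κ p * ‖f p‖ ^ 2) (fun n => ?_)
    (fun n => .of_forall fun p => ?_) (fun n => ?_) (.of_forall fun p => ?_)
  · exact integrable_mul_norm_sq (continuous_pairPotential (continuous_regCoulomb (hε n)))
      hf.continuous hs
  · exact mul_nonneg (pairPotential_nonneg (regCoulomb_nonneg (hε n).le) hZ hκ p) (by positivity)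
  · rw [le_div_iff₀' hd]
    exact sub_one_mul_integral_pairPotential_regCoulomb_le b (hε n) hZ hκ hf hs
  · exact (tendsto_pairPotential (fun z => (tendsto_regCoulomb z).comp hε_lim) p).mul_const _

theorem coulomb_form_bound_hydrogen_general (hι : 2 ≤ Fintype.card ι) (hZ : 0 ≤ Z) (hκ : 0 ≤ κ)
    (hf : ContDiff ℝ 1 f) (hs : HasCompactSupport f) :
    (Fintype.card ι - 1) * (κ * ∫ p, ‖f p‖ ^ 2 / ‖p.1 - p.2‖ ∂μ.prod μ) ≤
      ∫ p, gradNormSq b f p ∂μ.prod μ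
      - (Fintype.card ι - 1) * (Z * ∫ p, (1 / ‖p.1‖ + 1 / ‖p.2‖) * ‖f p‖ ^ 2 ∂μ.prod μ)
      + 2 * (Z + κ / 2) ^ 2 * ∫ p, ‖f p‖ ^ 2 ∂μ.prod μ := by
  have integrable_pot {Z κ : ℝ} (hZ : 0 ≤ Z) (hκ : 0 ≤ κ) :
      Integrable (fun p => pairPotential (1 / ‖·‖) Z κ p * ‖f p‖ ^ 2) (μ.prod μ) :=
    (integrable_pairPotential_and_sub_one_mul_integral_le b hι hZ hκ hf hs).1
  have integrable_nuclear : Integrable (fun p => (1 / ‖p.1‖ + 1 / ‖p.2‖) * ‖f p‖ ^ 2)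
      (μ.prod μ) := by
    simpa [pairPotential] using integrable_pot zero_le_one le_rfl
  have integrable_electronic : Integrable (fun p => ‖f p‖ ^ 2 / ‖p.1 - p.2‖) (μ.prod μ) := by
    simpa [pairPotential, div_eq_inv_mul] using integrable_pot le_rfl zero_le_one
  have split (p : E × E) : pairPotential (1 / ‖·‖) Z κ p * ‖f p‖ ^ 2 =
      Z * ((1 / ‖p.1‖ + 1 / ‖p.2‖) * ‖f p‖ ^ 2) + κ * (‖f p‖ ^ 2 / ‖p.1 - p.2‖) := by
    unfold pairPotential; ring
  have bound :=
    (integrable_pairPotential_and_sub_one_mul_integral_le (μ := μ) b hι hZ hκ hf hs).2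
  simp only [split] at bound
  rw [integral_add (integrable_nuclear.const_mul Z) (integrable_electronic.const_mul κ),
    integral_const_mul, integral_const_mul] at bound
  linarith

end TwoElectrons

/-- Quadratic-form version of the operator inequality (3.7):
`1/|x₁ - x₂| ≤ h_{x₁} + h_{x₂} + 10` with `h_x := -(1/2)Δ_x - 1/|x|`, on ℝ³ × ℝ³. -/
theorem coulomb_form_bound_hydrogen
    (f : EuclideanSpace ℝ (Fin 3) × EuclideanSpace ℝ (Fin 3) → ℂ)
    (hf : ContDiff ℝ (⊤ : ℕ∞) f) (hsupp : HasCompactSupport f) :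
    ∫ p : EuclideanSpace ℝ (Fin 3) × EuclideanSpace ℝ (Fin 3),
        ‖f p‖ ^ 2 / ‖p.1 - p.2‖ ≤
      (1 / 2) * (∫ p : EuclideanSpace ℝ (Fin 3) × EuclideanSpace ℝ (Fin 3),
          ((∑ i : Fin 3,
              ‖fderiv ℝ (fun x => f (x, p.2)) p.1 (EuclideanSpace.single i 1)‖ ^ 2) +
           ∑ i : Fin 3,
              ‖fderiv ℝ (fun y => f (p.1, y)) p.2 (EuclideanSpace.single i 1)‖ ^ 2))
      - (∫ p : EuclideanSpace ℝ (Fin 3) × EuclideanSpace ℝ (Fin 3),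
          (1 / ‖p.1‖ + 1 / ‖p.2‖) * ‖f p‖ ^ 2)
      + 10 * ∫ p : EuclideanSpace ℝ (Fin 3) × EuclideanSpace ℝ (Fin 3), ‖f p‖ ^ 2 := by
  have bound := coulomb_form_bound_hydrogen_general (μ := volume)
    (EuclideanSpace.basisFun (Fin 3) ℝ) (by simp) zero_le_one zero_le_one
    (hf.of_le (by exact_mod_cast le_top)) hsupp
  have norm_sq_nonneg : 0 ≤ ∫ p, ‖f p‖ ^ 2 := integral_nonneg fun p => by positivity
  simp only [gradNormSq, EuclideanSpace.basisFun_apply, Fintype.card_fin, ← Measure.volume_eq_prod]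
    at bound
  linarith
end
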